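/- arXiv:2301.05811 — 3 statements merged into one kernel-verified Lean document; each statement's English description precedes it below -/
import Mathlib

section
/- Let n be a positive integer, let A and B be nonempty subsets of {1,...,n}, and let (h(j))_{j=1}^{n} be independent random variables, each uniformly distributed on the interval [0,1]. Then the probability that min_{j∈A} h(j) = min_{j∈B} h(j) is exactly |A∩B| / |A∪B|. -/
/-! Independent atomless values almost surely have no ties, so the minimiser over `A ∪ B` is unique,
and by exchangeability it is equally likely to be any element of `A ∪ B`. The minima over `A` and
over `B` agree exactly when it lies in `A ∩ B`. -/

open MeasureTheory Finset
open scoped ENNReal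

/-- The product measure on `Fin n → ℝ` in which each coordinate is an independent
uniform random variable on `[0,1]`: a uniform hash family on `{1,...,n}`. -/
noncomputable def uniformHash (J : Type*) [Fintype J] : Measure (J → ℝ) :=
  Measure.pi fun _ : J => (volume : Measure ℝ).restrict (Set.Icc 0 1)

open ProbabilityTheory

section StrictMin

variable {J α : Type*} [LinearOrder α] {A B U : Finset J} {h : J → α} {i : J}

/-- The event that the family `h` attains its minimum over `U` at `i` and at no other element
of `U`; `i` itself need not belong to `U`. -/
def strictMinAt (α : Type*) [LinearOrder α] (U : Finset J) (i : J) : Set (J → α) :=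
  {h | ∀ j ∈ U, j ≠ i → h i < h j}

lemma le_of_mem_strictMinAt (hi : h ∈ strictMinAt α U i) {j : J} (hj : j ∈ U) : h i ≤ h j := by
  rcases eq_or_ne j i with rfl | hji
  · exact le_rfl
  · exact (hi j hj hji).le

lemma mem_strictMinAt_of_injOn (hinj : Set.InjOn h U) (hi : i ∈ U) (hmin : ∀ j ∈ U, h i ≤ h j) :
    h ∈ strictMinAt α U i :=
  fun j hj hji => (hmin j hj).lt_of_ne fun hij => hji (hinj hj hi hij.symm)

lemma exists_mem_strictMinAt_of_injOn (hU : U.Nonempty) (hinj : Set.InjOn h U) :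
    ∃ i ∈ U, h ∈ strictMinAt α U i := by
  obtain ⟨i, hi, hmin⟩ := U.exists_min_image h hU
  exact ⟨i, hi, mem_strictMinAt_of_injOn hinj hi hmin⟩

lemma pairwiseDisjoint_strictMinAt (U : Finset J) :
    (U : Set J).PairwiseDisjoint (strictMinAt α U) := fun i hi k hk hik =>
  Set.disjoint_left.2 fun _ hmi hmk => (hmi k hk hik.symm).asymm (hmk i hi hik)

lemma preimage_comp_strictMinAt (σ : Equiv.Perm J) :
    (fun h : J → α => h ∘ σ) ⁻¹' strictMinAt α U i =
      strictMinAt α (U.map σ.toEmbedding) (σ i) := by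
  ext h
  simp only [strictMinAt, Set.mem_preimage, Set.mem_ofPred_eq, forall_mem_map,
    Equiv.coe_toEmbedding, Function.comp_apply, σ.injective.ne_iff]

lemma inf'_eq_of_forall_le (hU : U.Nonempty) (hi : i ∈ U) (hmin : ∀ j ∈ U, h i ≤ h j) :
    U.inf' hU h = h i :=
  (inf'_le h hi).antisymm (le_inf' hU h hmin)

lemma inf'_eq_inf'_iff_exists_mem_strictMinAt [DecidableEq J] (hA : A.Nonempty) (hB : B.Nonempty)
    (hinj : Set.InjOn h ↑(A ∪ B)) :
    A.inf' hA h = B.inf' hB h ↔ ∃ k ∈ A ∩ B, h ∈ strictMinAt α (A ∪ B) k := by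
  constructor
  · intro hAB
    obtain ⟨a, ha, hmin_a⟩ := A.exists_mem_eq_inf' hA h
    obtain ⟨b, hb, hmin_b⟩ := B.exists_mem_eq_inf' hB h
    obtain rfl : a = b := hinj (mem_union_left B ha) (mem_union_right A hb)
      (hmin_a.symm.trans (hAB.trans hmin_b))
    refine ⟨a, mem_inter.2 ⟨ha, hb⟩, mem_strictMinAt_of_injOn hinj (mem_union_left B ha) ?_⟩
    intro j hj
    rcases mem_union.1 hj with hjA | hjB
    · exact hmin_a ▸ inf'_le h hjA
    · exact hmin_b ▸ inf'_le h hjB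
  · rintro ⟨k, hk, hmin⟩
    rw [inf'_eq_of_forall_le hA (mem_inter.1 hk).1
        fun j hj => le_of_mem_strictMinAt hmin (mem_union_left B hj),
      inf'_eq_of_forall_le hB (mem_inter.1 hk).2
        fun j hj => le_of_mem_strictMinAt hmin (mem_union_right A hj)]

end StrictMin

section Ties

variable {J α Ω : Type*} [MeasurableSpace α] [MeasurableSpace Ω]

lemma ae_ne_of_indepFun [MeasurableEq α] {P : Measure Ω} [IsFiniteMeasure P] {X Y : Ω → α}
    (hX : AEMeasurable X P) (hY : AEMeasurable Y P) (hXY : IndepFun X Y P)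
    [NullSingletonClass (P.map Y)] : ∀ᵐ ω ∂P, X ω ≠ Y ω := by
  have hprod : ∀ᵐ p ∂(P.map X).prod (P.map Y), p.1 ≠ p.2 := by
    refine (Measure.ae_prod_iff_ae_ae measurableSet_diagonal.compl).2 ?_
    filter_upwards with x
    exact ((P.map Y).ae_ne x).mono fun _ hne => hne.symm
  rw [← (indepFun_iff_map_prod_eq_prod_map_map hX hY).1 hXY] at hprod
  exact ae_of_ae_map (hX.prodMk hY) hprod

lemma pairwise_ae_ne_pi [Fintype J] [MeasurableEq α] (μ : J → Measure α)
    [∀ i, IsProbabilityMeasure (μ i)] [∀ i, NullSingletonClass (μ i)] :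
    Pairwise fun i j => ∀ᵐ h ∂Measure.pi μ, h i ≠ h j := by
  intro i j hij
  have hindep : IndepFun (fun h => h i) (fun h => h j) (Measure.pi μ) :=
    (iIndepFun_pi (X := fun _ => id) fun _ => aemeasurable_id).indepFun hij
  have : NullSingletonClass ((Measure.pi μ).map fun h => h j) := by
    rw [(measurePreserving_eval μ j).map_eq]
    infer_instance
  exact ae_ne_of_indepFun (measurable_pi_apply i).aemeasurable
    (measurable_pi_apply j).aemeasurable hindep

lemma ae_injOn_of_pairwise_ae_ne {P : Measure (J → α)}
    (hne : Pairwise fun i j => ∀ᵐ h ∂P, h i ≠ h j) (U : Finset J) :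
    ∀ᵐ h ∂P, Set.InjOn h U := by
  have hU : ∀ᵐ h ∂P, ∀ i ∈ U, ∀ j ∈ U, i ≠ j → h i ≠ h j := by
    simp only [Filter.eventually_all_finset, Filter.eventually_imp_distrib_left]
    exact fun i _ j _ hij => hne hij
  filter_upwards [hU] with h hh i hi j hj
  exact not_imp_not.1 (hh i hi j hj)

end Ties

section Exchangeable

variable {J α : Type*} [MeasurableSpace α]

/-- A law on families indexed by `J` is exchangeable if permuting the coordinates preserves it.
For infinite `J` all permutations are allowed, not only the finitely supported ones. -/
def Exchangeable (P : Measure (J → α)) : Prop :=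
  ∀ σ : Equiv.Perm J, MeasurePreserving (fun h : J → α => h ∘ σ) P P

lemma exchangeable_pi [Fintype J] (μ : Measure α) [SigmaFinite μ] :
    Exchangeable (Measure.pi fun _ : J => μ) := fun σ =>
  measurePreserving_arrowCongr' (fun _ => μ) (fun _ => μ) σ.symm (.refl α) fun _ => .id μ

variable [LinearOrder α] [TopologicalSpace α] [OrderClosedTopology α] [SecondCountableTopology α]
  [OpensMeasurableSpace α] {P : Measure (J → α)} {A B U V : Finset J} {i k : J}

lemma measurableSet_strictMinAt (U : Finset J) (i : J) : MeasurableSet (strictMinAt α U i) := by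
  simp only [strictMinAt, Set.ofPred_forall]
  exact U.measurableSet_biInter fun j _ => .iInter fun _ =>
    measurableSet_lt (measurable_pi_apply i) (measurable_pi_apply j)

lemma Exchangeable.measure_strictMinAt_eq (hP : Exchangeable P) (hi : i ∈ U) (hk : k ∈ U) :
    P (strictMinAt α U i) = P (strictMinAt α U k) := by
  classical
  have hmap : U.map (Equiv.swap i k).toEmbedding = U :=
    map_perm fun j hj => by
      rcases Equiv.swap_apply_ne_self_iff.1 hj with ⟨-, rfl | rfl⟩ <;> assumption
  calc P (strictMinAt α U i)
      = P ((fun h => h ∘ Equiv.swap i k) ⁻¹' strictMinAt α U i) :=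
        ((hP _).measure_preimage (measurableSet_strictMinAt U i).nullMeasurableSet).symm
    _ = P (strictMinAt α U k) := by
        rw [preimage_comp_strictMinAt, hmap, Equiv.swap_apply_left]

lemma Exchangeable.measure_strictMinAt [IsProbabilityMeasure P] (hP : Exchangeable P)
    (hne : Pairwise fun i j => ∀ᵐ h ∂P, h i ≠ h j) (hi : i ∈ U) :
    P (strictMinAt α U i) = (#U : ℝ≥0∞)⁻¹ := by
  have hexists : ∀ᵐ h ∂P, h ∈ ⋃ k ∈ U, strictMinAt α U k := by
    filter_upwards [ae_injOn_of_pairwise_ae_ne hne U] with h hinj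
    simpa only [Set.mem_iUnion, exists_prop] using exists_mem_strictMinAt_of_injOn ⟨i, hi⟩ hinj
  refine ENNReal.eq_inv_of_mul_eq_one_left ?_
  calc P (strictMinAt α U i) * #U
      = ∑ k ∈ U, P (strictMinAt α U k) := by
        rw [sum_congr rfl fun k hk => hP.measure_strictMinAt_eq hk hi, sum_const, nsmul_eq_mul,
          mul_comm]
    _ = P (⋃ k ∈ U, strictMinAt α U k) :=
        (measure_biUnion_finset (pairwiseDisjoint_strictMinAt U)
          fun k _ => measurableSet_strictMinAt U k).symm
    _ = 1 :=
        (mem_ae_iff_prob_eq_one <|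
          U.measurableSet_biUnion fun k _ => measurableSet_strictMinAt U k).1 hexists

lemma Exchangeable.measure_biUnion_strictMinAt [IsProbabilityMeasure P] (hP : Exchangeable P)
    (hne : Pairwise fun i j => ∀ᵐ h ∂P, h i ≠ h j) (hVU : V ⊆ U) :
    P (⋃ k ∈ V, strictMinAt α U k) = (#V : ℝ≥0∞) / #U := by
  rw [measure_biUnion_finset ((pairwiseDisjoint_strictMinAt U).subset (coe_subset.2 hVU))
      fun k _ => measurableSet_strictMinAt U k,
    sum_congr rfl fun k hk => hP.measure_strictMinAt hne (hVU hk), sum_const, nsmul_eq_mul,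
    div_eq_mul_inv]

theorem minhash_collision_probability_general [DecidableEq J] [IsProbabilityMeasure P]
    (hP : Exchangeable P) (hne : Pairwise fun i j => ∀ᵐ h ∂P, h i ≠ h j)
    (hA : A.Nonempty) (hB : B.Nonempty) :
    P {h | A.inf' hA h = B.inf' hB h} = (#(A ∩ B) : ℝ≥0∞) / #(A ∪ B) := by
  rw [← hP.measure_biUnion_strictMinAt hne inter_subset_union]
  refine measure_congr (Filter.eventuallyEq_set.2 ?_)
  filter_upwards [ae_injOn_of_pairwise_ae_ne hne (A ∪ B)] with h hinj
  simpa only [Set.mem_iUnion, exists_prop] using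
    inf'_eq_inf'_iff_exists_mem_strictMinAt hA hB hinj

end Exchangeable

instance isProbabilityMeasure_restrict_Icc_zero_one :
    IsProbabilityMeasure ((volume : Measure ℝ).restrict (Set.Icc 0 1)) :=
  ⟨by simp⟩

instance isProbabilityMeasure_uniformHash (J : Type*) [Fintype J] :
    IsProbabilityMeasure (uniformHash J) :=
  inferInstanceAs (IsProbabilityMeasure (Measure.pi _))

/-- If `A` and `B` are nonempty subsets of `{1,...,n}` and `(h j)_{j}` are independent
uniform random variables on `[0,1]`, then the probability that
`min_{j ∈ A} h j = min_{j ∈ B} h j` is exactly `|A ∩ B| / |A ∪ B|`. -/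
theorem minhash_collision_probability (n : ℕ) (hn : 0 < n)
    (A B : Finset (Fin n)) (hA : A.Nonempty) (hB : B.Nonempty) :
    uniformHash (Fin n) {h : Fin n → ℝ | A.inf' hA h = B.inf' hB h}
      = ((A ∩ B).card : ℝ≥0∞) / ((A ∪ B).card : ℝ≥0∞) := by
  exact minhash_collision_probability_general (exchangeable_pi _) (pairwise_ae_ne_pi _) hA hB
end

section
/- There is an absolute constant C > 0 such that the following holds. Let n be a positive integer, let S be a nonempty subset of {1,...,n}, let ε, δ ∈ (0,1), and let m be an integer with m ≥ C/(δ·ε²). Let h¹,...,hᵐ be mutually independent uniform hash families on {1,...,n}. Define the estimator Ũ = m / (∑_{i=1}^{m} min_{j∈S} hⁱ(j)) − 1. Then with probability at least 1−δ, (1−ε)·|S| ≤ Ũ ≤ (1+ε)·|S|. -/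
open MeasureTheory Finset
open scoped ENNReal

/-- `m` mutually independent uniform hash families on `J`. -/
noncomputable def hashFamilies (m : ℕ) (J : Type*) [Fintype J] :
    Measure (Fin m → J → ℝ) :=
  Measure.pi fun _ : Fin m => uniformHash J

/-! Put `k = |S|` and let `X` be the minimum of one hash family over `S`. Since
`P(X ≥ t) = (1 - t) ^ k`, the variable `X` has density `k (1 - t) ^ (k - 1)` on `[0,1]`, whence
`E[(1 - X) ^ q] = k / (k + q)`; the cases `q = 1, 2` give `E X = 1 / (k + 1)` and
`Var X = k / ((k + 1) ^ 2 (k + 2)) ≤ (E X) ^ 2`. By Chebyshev's inequality, the sum of `m`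
independent copies of `X` has relative error at least `η / 2` with probability at most
`4 / (m η ^ 2)`. A relative error below `η / 2 ≤ 1 / 2` in the sum becomes a relative error below
`η` in its reciprocal, that is, in `Ũ + 1` as an estimate of `k + 1`. Finally
`η = ε k / (k + 1) ≥ ε / 2` turns this into `|Ũ - k| < ε k`, with failure probability at most
`16 / (m ε ^ 2)`. -/

open ProbabilityTheory

lemma abs_div_sub_lt_of_abs_sub_div_lt {m a y η : ℝ} (hm : 0 < m) (ha : 0 < a) (hη : η ≤ 1)
    (h : |y - m / a| < η / 2 * (m / a)) : |m / y - a| < η * a := by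
  have hma : 0 < m / a := by positivity
  have hη_pos : 0 < η := by
    have := pos_of_mul_pos_left ((abs_nonneg _).trans_lt h) hma.le
    linarith
  have hy : m / a / 2 ≤ y := by nlinarith [(abs_lt.1 h).1]
  have hy_pos : 0 < y := by linarith
  calc |m / y - a| = a / y * |y - m / a| := by
        have hfactor : m / y - a = -(a / y * (y - m / a)) := by
          field_simp
          ring
        rw [hfactor, abs_neg, abs_mul, abs_of_pos (div_pos ha hy_pos)]
    _ < a / y * (η / 2 * (m / a)) := by gcongr
    _ = η * a * (m / a / 2 / y) := by ring
    _ ≤ η * a := mul_le_of_le_one_right (by positivity) ((div_le_one hy_pos).2 hy)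

lemma measure_pi_le_abs_sum_sub_le {Ω ι : Type*} [MeasurableSpace Ω] [Fintype ι] {μ : Measure Ω}
    [IsProbabilityMeasure μ] {X : Ω → ℝ} (hX : MemLp X 2 μ) {c : ℝ} (hc : 0 < c) :
    Measure.pi (fun _ : ι => μ) {ω | c ≤ |∑ i, X (ω i) - Fintype.card ι * μ[X]|} ≤
      ENNReal.ofReal (Fintype.card ι * Var[X; μ] / c ^ 2) := by
  have hXi (i : ι) : MemLp (fun ω : ι → Ω => X (ω i)) 2 (Measure.pi fun _ => μ) :=
    hX.comp_measurePreserving (measurePreserving_eval (fun _ : ι => μ) i)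
  have hmean : ∫ ω : ι → Ω, ∑ i, X (ω i) ∂Measure.pi (fun _ => μ) = Fintype.card ι * μ[X] := by
    rw [integral_finsetSum _ fun i _ => (hXi i).integrable one_le_two]
    simp [integral_comp_eval (μ := fun _ : ι => μ) hX.1]
  have hvar : Var[∑ i, fun ω : ι → Ω => X (ω i); Measure.pi fun _ => μ] =
      Fintype.card ι * Var[X; μ] := by
    simp [variance_sum_pi fun _ => hX]
  simpa only [hvar, Finset.sum_apply, hmean] using
    meas_ge_le_variance_div_sq (memLp_finsetSum' univ fun i _ => hXi i) hc

lemma continuous_inf'_eval {J α : Type*} [SemilatticeInf α] [TopologicalSpace α] [ContinuousInf α]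
    (S : Finset J) (hS : S.Nonempty) : Continuous fun h : J → α => S.inf' hS h :=
  Continuous.finset_inf'_apply hS fun j _ => continuous_apply j

lemma measure_pi_le_inf' {J α : Type*} [Fintype J] [SemilatticeInf α] [MeasurableSpace α]
    (μ : Measure α) [IsProbabilityMeasure μ] (S : Finset J) (hS : S.Nonempty) (t : α) :
    Measure.pi (fun _ : J => μ) {h | t ≤ S.inf' hS h} = μ (Set.Ici t) ^ #S := by
  have hset : {h : J → α | t ≤ S.inf' hS h} = Set.pi S fun _ => Set.Ici t := by
    ext h
    simp [Set.mem_pi]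
  rw [hset, Measure.pi_pi_finset, Finset.prod_const]

lemma integral_mul_one_sub_pow {k : ℕ} (hk : k ≠ 0) (q : ℕ) (a : ℝ) :
    ∫ t in a..1, k * (1 - t) ^ (k - 1) * (1 - t) ^ q = k / (k + q) * (1 - a) ^ (k + q) := by
  have hexp : k - 1 + q + 1 = k + q := by lia
  simp_rw [mul_assoc, ← pow_add]
  rw [intervalIntegral.integral_const_mul,
    intervalIntegral.integral_comp_sub_left (fun u : ℝ => u ^ (k - 1 + q)) 1, integral_pow,
    ← Nat.cast_add_one, hexp, sub_self, zero_pow (by lia), Nat.cast_add]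
  ring

lemma lintegral_Icc_mul_one_sub_pow {k : ℕ} (hk : k ≠ 0) (a : ℝ) :
    ∫⁻ t in Set.Icc a 1, ENNReal.ofReal (k * (1 - t) ^ (k - 1)) = ENNReal.ofReal (1 - a) ^ k := by
  rcases lt_or_ge 1 a with ha | ha
  · rw [Set.Icc_eq_empty ha.not_ge, Measure.restrict_empty, lintegral_zero_measure,
      ENNReal.ofReal_of_nonpos (sub_nonpos.2 ha.le), zero_pow hk]
  have hcont : Continuous fun t : ℝ => k * (1 - t) ^ (k - 1) := by fun_prop
  have hnonneg : ∀ᵐ t : ℝ ∂volume.restrict (Set.Icc a 1), 0 ≤ k * (1 - t) ^ (k - 1) :=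
    (ae_restrict_mem measurableSet_Icc).mono fun t ht =>
      mul_nonneg k.cast_nonneg (pow_nonneg (sub_nonneg.2 ht.2) _)
  have hintegral : ∫ t in a..1, k * (1 - t) ^ (k - 1) = (1 - a) ^ k := by
    simpa [hk] using integral_mul_one_sub_pow hk 0 a
  rw [← ofReal_integral_eq_lintegral_ofReal hcont.integrableOn_Icc hnonneg,
    integral_Icc_eq_integral_Ioc, ← intervalIntegral.integral_of_le ha, hintegral,
    ENNReal.ofReal_pow (sub_nonneg.2 ha)]

namespace uniformHash

variable {J : Type*} [Fintype J] (S : Finset J) (hS : S.Nonempty)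

instance instIsProbabilityMeasure : IsProbabilityMeasure (uniformHash J) := by
  unfold uniformHash
  infer_instance

lemma map_inf' :
    (uniformHash J).map (fun h => S.inf' hS h) =
      (volume.restrict (Set.Icc 0 1)).withDensity
        fun t => ENNReal.ofReal (#S * (1 - t) ^ (#S - 1)) := by
  have hmeas := (continuous_inf'_eval (α := ℝ) S hS).measurable
  have := Measure.isProbabilityMeasure_map (μ := uniformHash J) hmeas.aemeasurable
  refine Measure.ext_of_Ici _ _ fun t => ?_
  have hinter : Set.Ici t ∩ Set.Icc 0 1 = Set.Icc (t ⊔ 0) 1 := by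
    ext
    simp [and_assoc]
  have htail : volume.restrict (Set.Icc 0 1) (Set.Ici t) = ENNReal.ofReal (1 - t ⊔ 0) := by
    rw [Measure.restrict_apply measurableSet_Ici, hinter, Real.volume_Icc]
  calc (uniformHash J).map (fun h => S.inf' hS h) (Set.Ici t)
      = uniformHash J {h | t ≤ S.inf' hS h} := Measure.map_apply hmeas measurableSet_Ici
    _ = ENNReal.ofReal (1 - t ⊔ 0) ^ #S := by rw [uniformHash, measure_pi_le_inf', htail]
    _ = _ := by
      rw [withDensity_apply _ measurableSet_Ici, Measure.restrict_restrict measurableSet_Ici,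
        hinter, lintegral_Icc_mul_one_sub_pow hS.card_ne_zero]

lemma ae_inf'_mem_Icc : ∀ᵐ h ∂uniformHash J, S.inf' hS h ∈ Set.Icc 0 1 := by
  refine ae_of_ae_map (continuous_inf'_eval S hS).aemeasurable ?_
  rw [map_inf']
  exact (withDensity_absolutelyContinuous _ _).ae_le (ae_restrict_mem measurableSet_Icc)

lemma memLp_inf' (p : ℝ≥0∞) : MemLp (fun h => S.inf' hS h) p (uniformHash J) :=
  memLp_of_bounded (ae_inf'_mem_Icc S hS) (continuous_inf'_eval S hS).aestronglyMeasurable p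

lemma integral_comp_inf' {f : ℝ → ℝ} (hf : Measurable f) :
    ∫ h, f (S.inf' hS h) ∂uniformHash J =
      ∫ t in (0 : ℝ)..1, #S * (1 - t) ^ (#S - 1) * f t := by
  rw [intervalIntegral.integral_of_le zero_le_one, ← integral_Icc_eq_integral_Ioc,
    ← integral_map (continuous_inf'_eval S hS).aemeasurable hf.aestronglyMeasurable, map_inf',
    integral_withDensity_eq_integral_toReal_smul (by fun_prop)
      (Filter.Eventually.of_forall fun _ => ENNReal.ofReal_lt_top)]
  refine setIntegral_congr_fun measurableSet_Icc fun t ht => ?_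
  have : 0 ≤ 1 - t := sub_nonneg.2 ht.2
  simp only [smul_eq_mul]
  rw [ENNReal.toReal_ofReal (by positivity)]

lemma integral_one_sub_inf'_pow (q : ℕ) :
    ∫ h, (1 - S.inf' hS h) ^ q ∂uniformHash J = #S / (#S + q) := by
  rw [integral_comp_inf' S hS (f := fun t => (1 - t) ^ q) (by fun_prop),
    integral_mul_one_sub_pow hS.card_ne_zero, sub_zero, one_pow, mul_one]

lemma integral_inf' : ∫ h, S.inf' hS h ∂uniformHash J = 1 / (#S + 1) := by
  have hint := (memLp_inf' S hS 1).integrable le_rfl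
  have hcompl : 1 - ∫ h, S.inf' hS h ∂uniformHash J = #S / (#S + 1) := by
    simpa [integral_sub (integrable_const 1) hint] using integral_one_sub_inf'_pow S hS 1
  rw [← sub_sub_self 1 (∫ h, S.inf' hS h ∂uniformHash J), hcompl]
  field_simp
  ring

lemma variance_inf' :
    Var[fun h => S.inf' hS h; uniformHash J] = #S / ((#S + 1) ^ 2 * (#S + 2)) := by
  have hX := memLp_inf' S hS 2
  have hcompl : MemLp (fun h => 1 - S.inf' hS h) 2 (uniformHash J) := (memLp_const 1).sub hX
  have hmean : ∫ h, (1 - S.inf' hS h) ∂uniformHash J = #S / (#S + 1) := by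
    simpa using integral_one_sub_inf'_pow S hS 1
  rw [← variance_const_sub hX.1 1, variance_eq_sub hcompl]
  simp only [Pi.pow_apply, hmean, integral_one_sub_inf'_pow, Nat.cast_ofNat]
  field_simp
  ring

lemma variance_inf'_le : Var[fun h => S.inf' hS h; uniformHash J] ≤ (1 / (#S + 1)) ^ 2 := by
  rw [variance_inf', div_pow, one_pow, div_le_div_iff₀ (by positivity) (by positivity)]
  nlinarith [sq_nonneg (#S + 1 : ℝ)]

end uniformHash

/-- The estimator `Ũ` of `|S|` computed from `m` hash families on `J`. -/
noncomputable def unionSizeEstimator {m : ℕ} {J : Type*} (S : Finset J) (hS : S.Nonempty)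
    (H : Fin m → J → ℝ) : ℝ :=
  m / (∑ i, S.inf' hS (H i)) - 1

section Estimator

variable {m : ℕ} {J : Type*} (S : Finset J) (hS : S.Nonempty)

lemma abs_unionSizeEstimator_sub_card_lt (hm : 0 < m) {ε : ℝ} (hε₀ : 0 < ε) (hε₁ : ε ≤ 1)
    {H : Fin m → J → ℝ}
    (hH : |∑ i, S.inf' hS (H i) - m * (1 / (#S + 1))| < ε / 4 * (m * (1 / (#S + 1)))) :
    |unionSizeEstimator S hS H - #S| < ε * #S := by
  have hk : (1 : ℝ) ≤ #S := by exact_mod_cast hS.card_pos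
  have hm' : (0 : ℝ) < m := by exact_mod_cast hm
  have hη₁ : ε * #S / (#S + 1) ≤ 1 := by
    rw [div_le_one (by positivity)]
    nlinarith
  have hη₀ : ε / 4 ≤ ε * #S / (#S + 1) / 2 := by
    rw [div_div, div_le_div_iff₀ (by positivity) (by positivity)]
    nlinarith
  have hdev : |∑ i, S.inf' hS (H i) - m / (#S + 1)| <
      ε * #S / (#S + 1) / 2 * (m / (#S + 1)) := by
    rw [mul_one_div] at hH
    exact hH.trans_le (by gcongr)
  calc |unionSizeEstimator S hS H - #S|
      = |m / (∑ i, S.inf' hS (H i)) - (#S + 1)| := by rw [unionSizeEstimator, sub_sub, add_comm]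
    _ < ε * #S / (#S + 1) * (#S + 1) :=
      abs_div_sub_lt_of_abs_sub_div_lt hm' (by positivity) hη₁ hdev
    _ = ε * #S := div_mul_cancel₀ _ (by positivity)

variable [Fintype J]

lemma hashFamilies_le_abs_unionSizeEstimator_sub_card_le (hm : 0 < m) {ε : ℝ} (hε₀ : 0 < ε)
    (hε₁ : ε ≤ 1) :
    hashFamilies m J {H | ε * #S ≤ |unionSizeEstimator S hS H - #S|} ≤
      ENNReal.ofReal (16 / (m * ε ^ 2)) := by
  set mean : ℝ := 1 / (#S + 1) with hmean
  have hmean_pos : 0 < mean := by positivity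
  calc hashFamilies m J {H | ε * #S ≤ |unionSizeEstimator S hS H - #S|}
      ≤ hashFamilies m J {H | ε / 4 * (m * mean) ≤ |∑ i, S.inf' hS (H i) - m * mean|} :=
        measure_mono fun H hH => le_of_not_gt fun hdev =>
          hH.not_gt (abs_unionSizeEstimator_sub_card_lt S hS hm hε₀ hε₁ hdev)
    _ ≤ ENNReal.ofReal
          (m * Var[fun h => S.inf' hS h; uniformHash J] / (ε / 4 * (m * mean)) ^ 2) := by
        simpa [uniformHash.integral_inf', hmean] using! measure_pi_le_abs_sum_sub_le (ι := Fin m)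
          (uniformHash.memLp_inf' S hS 2) (by positivity : 0 < ε / 4 * (m * mean))
    _ ≤ ENNReal.ofReal (m * mean ^ 2 / (ε / 4 * (m * mean)) ^ 2) := by
        gcongr
        exact uniformHash.variance_inf'_le S hS
    _ = ENNReal.ofReal (16 / (m * ε ^ 2)) := by
        congr 1
        field_simp
        norm_num

theorem union_size_estimator_general {ε δ : ℝ} (hε₀ : 0 < ε) (hε₁ : ε ≤ 1) (hδ : 0 < δ)
    (hm : 16 / (δ * ε ^ 2) ≤ m) :
    ENNReal.ofReal (1 - δ) ≤
      hashFamilies m J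
        {H | (1 - ε) * #S ≤ unionSizeEstimator S hS H ∧
          unionSizeEstimator S hS H ≤ (1 + ε) * #S} := by
  have hm_pos : (0 : ℝ) < m := lt_of_lt_of_le (by positivity) hm
  have : IsProbabilityMeasure (hashFamilies m J) := by
    unfold hashFamilies
    infer_instance
  set good : Set (Fin m → J → ℝ) :=
    {H | (1 - ε) * #S ≤ unionSizeEstimator S hS H ∧ unionSizeEstimator S hS H ≤ (1 + ε) * #S}
  have hcompl : goodᶜ ⊆ {H | ε * #S ≤ |unionSizeEstimator S hS H - #S|} := by
    refine fun H hH => show ε * #S ≤ |unionSizeEstimator S hS H - #S| from ?_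
    by_contra! hlt
    obtain ⟨hlower, hupper⟩ := abs_lt.1 hlt
    exact hH ⟨by linarith, by linarith⟩
  have hfail : hashFamilies m J goodᶜ ≤ ENNReal.ofReal δ := by
    refine (measure_mono hcompl).trans <|
      (hashFamilies_le_abs_unionSizeEstimator_sub_card_le S hS (Nat.cast_pos.1 hm_pos) hε₀
        hε₁).trans <| ENNReal.ofReal_le_ofReal ?_
    rw [div_le_iff₀ (by positivity)] at hm ⊢
    linarith
  rw [ENNReal.ofReal_sub 1 hδ.le, ENNReal.ofReal_one, tsub_le_iff_right,
    ← measure_univ (μ := hashFamilies m J)]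
  exact (measure_univ_le_add_compl good).trans (by gcongr)

end Estimator

/-- Union size (distinct elements) estimator: there is an absolute constant `C > 0` such
that for any nonempty `S ⊆ {1,...,n}`, `ε, δ ∈ (0,1)`, and integer `m ≥ C / (δ ε²)`, with
`h¹, ..., hᵐ` mutually independent uniform hash families on `{1,...,n}`, the estimator
`Ũ = m / (∑ i, min_{j ∈ S} hⁱ j) - 1` satisfies
`(1-ε)|S| ≤ Ũ ≤ (1+ε)|S|` with probability at least `1 - δ`. -/
theorem union_size_estimator :
    ∃ C : ℝ, 0 < C ∧
      ∀ (n : ℕ), 0 < n →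
      ∀ (S : Finset (Fin n)) (hS : S.Nonempty) (ε δ : ℝ),
        ε ∈ Set.Ioo (0 : ℝ) 1 → δ ∈ Set.Ioo (0 : ℝ) 1 →
        ∀ m : ℕ, C / (δ * ε ^ 2) ≤ (m : ℝ) →
          ENNReal.ofReal (1 - δ) ≤
            hashFamilies m (Fin n)
              {H : Fin m → Fin n → ℝ |
                (1 - ε) * (S.card : ℝ) ≤ (m : ℝ) / (∑ i, S.inf' hS (H i)) - 1 ∧
                (m : ℝ) / (∑ i, S.inf' hS (H i)) - 1 ≤ (1 + ε) * (S.card : ℝ)} :=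
  ⟨16, by norm_num, fun _ _ S hS _ _ hε hδ _ hm =>
    union_size_estimator_general S hS hε.1 hε.2.le hδ.1 hm⟩
end

section
/- Let L be a positive integer and let u, v ∈ ℝⁿ be nonzero unit vectors all of whose squared entries are integer multiples of 1/L, with expanded supports Ū and V̄ in {1,...,n}×{1,...,L}. Let (h(ℓ))_{ℓ∈{1,...,n}×{1,...,L}} be independent random variables, each uniformly distributed on [0,1]. Then for every index j with u[j] ≠ 0 and v[j] ≠ 0, the probability that min_{ℓ∈Ū} h(ℓ) = min_{ℓ∈V̄} h(ℓ) and that the common minimizer of h over Ū∪V̄ lies in the block {j}×{1,...,L} is exactly min(u[j]², v[j]²) / (∑_{k=1}^{n} max(u[k]², v[k]²)). In particular, conditioned on the two minima coinciding, the block index of the common minimizer equals j with probability min(u[j]², v[j]²) / ∑_{k : u[k]≠0, v[k]≠0} min(u[k]², v[k]²). -/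
open MeasureTheory Finset
open scoped ENNReal

/-- A minimizer of `f` over the nonempty finite set `s` (the minimizer of a uniform
hash family over a nonempty set is almost surely unique). -/
noncomputable def argminOn {α : Type*} (s : Finset α) (hs : s.Nonempty) (f : α → ℝ) : α :=
  (s.exists_min_image f hs).choose

/-- The expanded support of a vector `u` with discretization parameter `L`:
`Ū = {(i,k) ∈ {1,...,n} × {1,...,L} : k ≤ u[i]² ⬝ L}`, so that the block
`{i} × {1,...,L}` contributes exactly `u[i]² ⬝ L` elements when `u[i]²` is an
integer multiple of `1/L`.  (Here `Fin L` represents `{1,...,L}` via `k ↦ k+1`.) -/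
noncomputable def expandedSupport {n : ℕ} (L : ℕ) (u : Fin n → ℝ) :
    Finset (Fin n × Fin L) :=
  Finset.univ.filter fun p => ((p.2 : ℕ) + 1 : ℝ) ≤ (u p.1) ^ 2 * L

/-!
The hash values are almost surely distinct, and permuting the index set preserves their joint law,
so the minimizer over `Ū ∪ V̄` is uniformly distributed on `Ū ∪ V̄`. The minima over `Ū` and `V̄`
coincide exactly when this minimizer lies in `Ū ∩ V̄`. The event in question therefore has
probability `#(block j of Ū ∩ V̄) / #(Ū ∪ V̄)`, and `Ū ∪ V̄`, `Ū ∩ V̄` are themselves the expanded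
supports of `max |u| |v|` and `min |u| |v|`, whose blocks have `L · max (u k ^ 2) (v k ^ 2)` and
`L · min (u k ^ 2) (v k ^ 2)` elements.
-/

section IIDFamily

variable {J α : Type*} [MeasurableSpace α]

lemma measurableSet_setOf_isMinOn [PartialOrder α] [TopologicalSpace α] [OrderClosedTopology α]
    [SecondCountableTopology α] [OpensMeasurableSpace α] (W : Finset J) (a : J) :
    MeasurableSet {h : J → α | IsMinOn h W a} := by
  simp only [isMinOn_iff, Set.ofPred_forall]
  exact W.measurableSet_biInter fun b _ =>
    measurableSet_le (measurable_pi_apply a) (measurable_pi_apply b)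

lemma measure_prod_diagonal [MeasurableEq α] (μ ν : Measure α) [SFinite ν]
    [NullSingletonClass ν] : μ.prod ν (Set.diagonal α) = 0 :=
  Measure.measure_prod_null_of_ae_null measurableSet_diagonal <| .of_forall fun x =>
    measure_mono_null (fun _ hy => Eq.symm hy) (measure_singleton x)

variable [Fintype J] (μ : Measure α)

lemma measure_pi_apply_eq_apply [MeasurableEq α] [IsProbabilityMeasure μ] [NullSingletonClass μ]
    {a b : J} (hab : a ≠ b) :
    Measure.pi (fun _ : J => μ) {h | h a = h b} = 0 := by
  have law_eval (c : J) : (Measure.pi fun _ : J => μ).map (Function.eval c) = μ :=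
    (measurePreserving_eval (fun _ : J => μ) c).map_eq
  have law_pair : (Measure.pi fun _ : J => μ).map (fun h => (h a, h b)) = μ.prod μ := by
    have indep := (ProbabilityTheory.iIndepFun_pi (μ := fun _ : J => μ) (X := fun _ => id)
      fun _ => aemeasurable_id).indepFun hab
    refine ((ProbabilityTheory.indepFun_iff_map_prod_eq_prod_map_map
      (measurable_pi_apply a).aemeasurable (measurable_pi_apply b).aemeasurable).1 indep).trans ?_
    exact congrArg₂ Measure.prod (law_eval a) (law_eval b)
  have diagonal_null := measure_prod_diagonal μ μ
  rwa [← law_pair, Measure.map_apply (by fun_prop) measurableSet_diagonal] at diagonal_null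

lemma ae_pi_injective [MeasurableEq α] [IsProbabilityMeasure μ] [NullSingletonClass μ] :
    ∀ᵐ h ∂Measure.pi (fun _ : J => μ), Function.Injective h := by
  have h_ne : ∀ᵐ h ∂Measure.pi (fun _ : J => μ), ∀ a b : J, a ≠ b → h a ≠ h b := by
    simp only [ae_all_iff]
    intro a b hab
    simpa only [ae_iff, not_not] using measure_pi_apply_eq_apply μ hab
  filter_upwards [h_ne] with h hh a b
  exact not_imp_not.1 (hh a b)

variable [LinearOrder α] [TopologicalSpace α] [OrderClosedTopology α]
  [SecondCountableTopology α] [OpensMeasurableSpace α]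

lemma measure_pi_isMinOn_eq_of_mem [SigmaFinite μ] {W : Finset J} {a c : J} (ha : a ∈ W)
    (hc : c ∈ W) :
    Measure.pi (fun _ : J => μ) {h | IsMinOn h W a} =
      Measure.pi (fun _ : J => μ) {h | IsMinOn h W c} := by
  classical
  have swap_mem (b : J) (hb : b ∈ W) : Equiv.swap a c b ∈ W := by
    rw [Equiv.swap_apply_def]
    split_ifs <;> assumption
  have isMinOn_comp_swap (h : J → α) : IsMinOn (h ∘ Equiv.swap a c) W a ↔ IsMinOn h W c := by
    simp only [isMinOn_iff, Function.comp_apply, Equiv.swap_apply_left]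
    refine ⟨fun H b hb => ?_, fun H b hb => H _ (swap_mem b hb)⟩
    simpa only [Equiv.swap_apply_self] using H _ (swap_mem b hb)
  have comp_swap_preserving :=
    measurePreserving_arrowCongr' (fun _ : J => μ) (fun _ : J => μ) (Equiv.swap a c)
      (MeasurableEquiv.refl α) fun _ => MeasurePreserving.id μ
  rw [← comp_swap_preserving.measure_preimage (measurableSet_setOf_isMinOn W a).nullMeasurableSet]
  exact congrArg _ (Set.ext isMinOn_comp_swap)

variable [IsProbabilityMeasure μ] [NullSingletonClass μ]

lemma measure_pi_exists_isMinOn_eq_sum {W T : Finset J} (hT : T ⊆ W) :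
    Measure.pi (fun _ : J => μ) {h | ∃ a ∈ T, IsMinOn h W a} =
      ∑ a ∈ T, Measure.pi (fun _ : J => μ) {h | IsMinOn h W a} := by
  simp only [← exists_prop, Set.ofPred_exists]
  refine measure_biUnion_finset₀ (fun a ha b hb hab => ?_) fun a _ =>
    (measurableSet_setOf_isMinOn W a).nullMeasurableSet
  exact measure_mono_null (fun h ⟨h_min_a, h_min_b⟩ => le_antisymm (h_min_a (hT hb))
    (h_min_b (hT ha))) (measure_pi_apply_eq_apply μ hab)

lemma measure_pi_isMinOn {W : Finset J} {a : J} (ha : a ∈ W) :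
    Measure.pi (fun _ : J => μ) {h | IsMinOn h W a} = (#W : ℝ≥0∞)⁻¹ := by
  have exists_min : {h : J → α | ∃ b ∈ W, IsMinOn h W b} = Set.univ :=
    Set.eq_univ_of_forall fun h => W.exists_min_image h ⟨a, ha⟩
  have total := measure_pi_exists_isMinOn_eq_sum μ (subset_refl W)
  rw [exists_min, measure_univ, sum_congr rfl fun b hb => measure_pi_isMinOn_eq_of_mem μ hb ha,
    sum_const, nsmul_eq_mul, mul_comm] at total
  exact ENNReal.eq_inv_of_mul_eq_one_left total.symm

lemma measure_pi_exists_isMinOn {W T : Finset J} (hT : T ⊆ W) :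
    Measure.pi (fun _ : J => μ) {h | ∃ a ∈ T, IsMinOn h W a} = #T / #W := by
  rw [measure_pi_exists_isMinOn_eq_sum μ hT,
    sum_congr rfl fun a ha => measure_pi_isMinOn μ (hT ha), sum_const, nsmul_eq_mul,
    div_eq_mul_inv]

end IIDFamily

section Argmin

variable {α : Type*} {s t : Finset α} {f : α → ℝ}

lemma argminOn_mem (hs : s.Nonempty) : argminOn s hs f ∈ s :=
  (s.exists_min_image f hs).choose_spec.1

lemma isMinOn_argminOn (hs : s.Nonempty) : IsMinOn f s (argminOn s hs f) :=
  (s.exists_min_image f hs).choose_spec.2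

lemma argminOn_mem_iff_exists_isMinOn (hs : s.Nonempty) (hf : Set.InjOn f s) (hts : t ⊆ s) :
    argminOn s hs f ∈ t ↔ ∃ a ∈ t, IsMinOn f s a := by
  refine ⟨fun h => ⟨_, h, isMinOn_argminOn hs⟩, fun ⟨a, ha, ha_min⟩ => ?_⟩
  have : a = argminOn s hs f := hf (hts ha) (argminOn_mem hs)
    (le_antisymm (ha_min (argminOn_mem hs)) (isMinOn_argminOn hs (hts ha)))
  exact this ▸ ha

lemma inf'_eq_of_isMinOn {β : Type*} [SemilatticeInf β] {g : α → β} (hs : s.Nonempty) {a : α}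
    (ha : a ∈ s) (ha_min : IsMinOn g s a) : s.inf' hs g = g a :=
  le_antisymm (inf'_le g ha) (le_inf' hs g ha_min)

variable [DecidableEq α]

lemma inf'_eq_inf'_iff_argminOn_union_mem_inter (hs : s.Nonempty) (ht : t.Nonempty)
    (hf : Set.InjOn f (s ∪ t : Finset α)) :
    s.inf' hs f = t.inf' ht f ↔ argminOn (s ∪ t) hs.inl f ∈ s ∩ t := by
  set a := argminOn (s ∪ t) hs.inl f
  have ha : a ∈ s ∪ t := argminOn_mem hs.inl
  have ha_min : IsMinOn f (s ∪ t : Finset α) a := isMinOn_argminOn hs.inl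
  constructor
  · intro h_eq
    have hs_inf : s.inf' hs f = f a := by
      rw [← inf'_eq_of_isMinOn hs.inl ha ha_min, inf'_union hs ht, ← h_eq, inf_idem]
    obtain ⟨x, hx, hx_inf⟩ := s.exists_mem_eq_inf' hs f
    obtain ⟨y, hy, hy_inf⟩ := t.exists_mem_eq_inf' ht f
    have hxa : x = a := hf (mem_union_left t hx) ha (hx_inf.symm.trans hs_inf)
    have hya : y = a := hf (mem_union_right s hy) ha (hy_inf.symm.trans (h_eq.symm.trans hs_inf))
    exact mem_inter.2 ⟨hxa ▸ hx, hya ▸ hy⟩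
  · intro ha_inter
    obtain ⟨has, hat⟩ := mem_inter.1 ha_inter
    rw [inf'_eq_of_isMinOn hs has (ha_min.on_subset (coe_subset.2 subset_union_left)),
      inf'_eq_of_isMinOn ht hat (ha_min.on_subset (coe_subset.2 subset_union_right))]

end Argmin

section UniformHash

variable {J : Type*} [Fintype J]

instance : IsProbabilityMeasure ((volume : Measure ℝ).restrict (Set.Icc 0 1)) :=
  ⟨by simp⟩

lemma ae_uniformHash_injective : ∀ᵐ h ∂uniformHash J, Function.Injective h :=
  ae_pi_injective _

lemma uniformHash_argminOn_mem {W T : Finset J} (hW : W.Nonempty) (hT : T ⊆ W) :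
    uniformHash J {h | argminOn W hW h ∈ T} = #T / #W := by
  rw [← measure_pi_exists_isMinOn ((volume : Measure ℝ).restrict (Set.Icc 0 1)) hT]
  refine measure_congr ?_
  filter_upwards [ae_uniformHash_injective] with h hh
  exact propext (argminOn_mem_iff_exists_isMinOn hW hh.injOn hT)

variable [DecidableEq J] {U V : Finset J} (hU : U.Nonempty) (hV : V.Nonempty)

lemma uniformHash_inf'_eq_inf'_and_argminOn (p : J → Prop) [DecidablePred p] :
    uniformHash J {h | U.inf' hU h = V.inf' hV h ∧ p (argminOn (U ∪ V) hU.inl h)} =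
      #{a ∈ U ∩ V | p a} / #(U ∪ V) := by
  rw [← uniformHash_argminOn_mem hU.inl ((filter_subset p _).trans inter_subset_union)]
  refine measure_congr ?_
  filter_upwards [ae_uniformHash_injective] with h hh
  refine propext ?_
  change _ ∧ _ ↔ _ ∈ filter p (U ∩ V)
  rw [inf'_eq_inf'_iff_argminOn_union_mem_inter hU hV hh.injOn, mem_filter]

lemma uniformHash_inf'_eq_inf' :
    uniformHash J {h | U.inf' hU h = V.inf' hV h} = #(U ∩ V) / #(U ∪ V) := by
  simpa using uniformHash_inf'_eq_inf'_and_argminOn hU hV fun _ => True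

lemma cond_uniformHash_inf'_eq_inf'_argminOn (p : J → Prop) [DecidablePred p] :
    ProbabilityTheory.cond (uniformHash J) {h | U.inf' hU h = V.inf' hV h}
        {h | p (argminOn (U ∪ V) hU.inl h)} =
      #{a ∈ U ∩ V | p a} / #(U ∩ V) := by
  have measurable_inf' (S : Finset J) (hS : S.Nonempty) : Measurable fun h : J → ℝ => S.inf' hS h :=
    (Continuous.finset_inf'_apply hS fun i _ => continuous_apply i).measurable
  have union_card_ne_zero : (#(U ∪ V) : ℝ≥0∞) ≠ 0 := by simpa using hU.inl.card_ne_zero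
  rw [ProbabilityTheory.cond_apply (measurableSet_eq_fun (measurable_inf' U hU)
      (measurable_inf' V hV)), ← Set.ofPred_and, uniformHash_inf'_eq_inf'_and_argminOn,
    uniformHash_inf'_eq_inf', mul_comm, ← div_eq_mul_inv]
  exact ENNReal.mul_div_mul_right _ _ (ENNReal.inv_ne_zero.2 (ENNReal.natCast_ne_top _))
    (ENNReal.inv_ne_top.2 union_card_ne_zero)

end UniformHash

section MinMaxSq

variable {R : Type*} [Ring R] [LinearOrder R] [IsOrderedRing R]

lemma sq_max_abs (a b : R) : max |a| |b| ^ 2 = max (a ^ 2) (b ^ 2) := by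
  rw [← sq_abs a, ← sq_abs b]
  exact pow_left_monotoneOn.map_max (abs_nonneg a) (abs_nonneg b)

lemma sq_min_abs (a b : R) : min |a| |b| ^ 2 = min (a ^ 2) (b ^ 2) := by
  rw [← sq_abs a, ← sq_abs b]
  exact pow_left_monotoneOn.map_min (abs_nonneg a) (abs_nonneg b)

lemma sum_filter_ne_zero_min_sq {ι : Type*} [Fintype ι] (u v : ι → R) :
    ∑ k with u k ≠ 0 ∧ v k ≠ 0, min (u k ^ 2) (v k ^ 2) = ∑ k, min (u k ^ 2) (v k ^ 2) := by
  refine sum_filter_of_ne fun k _ => ?_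
  contrapose!
  intro h
  by_cases huk : u k = 0
  · simp [huk, sq_nonneg]
  · simp [h huk, sq_nonneg]

end MinMaxSq

section ExpandedSupport

variable {n L : ℕ} {u v : Fin n → ℝ}

/-- The vectors that an expanded support with parameter `L` represents exactly: each `u i ^ 2` is a
multiple of `1 / L` lying in `[0, 1]`, so that coordinate `i` fills `u i ^ 2 * L` of the `L` slots
of its block. -/
def IsDiscretized (L : ℕ) (u : Fin n → ℝ) : Prop :=
  ∀ i, ∃ m ≤ L, u i ^ 2 * L = (m : ℝ)

lemma isDiscretized_of_sum_sq_eq_one (hu1 : ∑ i, u i ^ 2 = 1)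
    (hu : ∀ i, ∃ k : ℤ, u i ^ 2 = (k : ℝ) / L) (hL : 0 < L) : IsDiscretized L u := by
  intro i
  have hL' : (0 : ℝ) < L := Nat.cast_pos.2 hL
  obtain ⟨k, hk⟩ := hu i
  have hkL : u i ^ 2 * L = k := by rw [hk, div_mul_cancel₀ _ hL'.ne']
  have hk_nonneg : 0 ≤ k := by
    have : (0 : ℝ) ≤ k := hkL ▸ by positivity
    exact_mod_cast this
  have sq_le_one : u i ^ 2 ≤ 1 :=
    hu1 ▸ single_le_sum (f := fun i => u i ^ 2) (fun i _ => sq_nonneg (u i)) (mem_univ i)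
  lift k to ℕ using hk_nonneg
  refine ⟨k, ?_, hkL⟩
  have hkL_le : u i ^ 2 * L ≤ L := mul_le_of_le_one_left hL'.le sq_le_one
  rw [hkL] at hkL_le
  exact_mod_cast hkL_le

lemma IsDiscretized.max_abs (hu : IsDiscretized L u) (hv : IsDiscretized L v) :
    IsDiscretized L fun i => max |u i| |v i| := fun i => by
  rcases max_choice |u i| |v i| with h | h <;> simp only [h, sq_abs]
  exacts [hu i, hv i]

lemma IsDiscretized.min_abs (hu : IsDiscretized L u) (hv : IsDiscretized L v) :
    IsDiscretized L fun i => min |u i| |v i| := fun i => by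
  rcases min_choice |u i| |v i| with h | h <;> simp only [h, sq_abs]
  exacts [hu i, hv i]

lemma expandedSupport_union :
    expandedSupport L u ∪ expandedSupport L v = expandedSupport L fun i => max |u i| |v i| := by
  ext p
  simp only [expandedSupport, mem_union, mem_filter_univ, sq_max_abs,
    max_mul_of_nonneg _ _ (Nat.cast_nonneg (α := ℝ) L), le_max_iff]

lemma expandedSupport_inter :
    expandedSupport L u ∩ expandedSupport L v = expandedSupport L fun i => min |u i| |v i| := by
  ext p
  simp only [expandedSupport, mem_inter, mem_filter_univ, sq_min_abs,
    min_mul_of_nonneg _ _ (Nat.cast_nonneg (α := ℝ) L), le_min_iff]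

lemma IsDiscretized.card_filter_fst_expandedSupport (hu : IsDiscretized L u) (i : Fin n) :
    (#{p ∈ expandedSupport L u | p.1 = i} : ℝ) = u i ^ 2 * L := by
  obtain ⟨m, hmL, hm⟩ := hu i
  have block_eq : {p ∈ expandedSupport L u | p.1 = i} =
      ({k : Fin L | (k : ℕ) < m} : Finset (Fin L)).map (.sectR i (Fin L)) := by
    ext ⟨a, k⟩
    simp only [expandedSupport, mem_filter, mem_univ, true_and, mem_map,
      Function.Embedding.sectR_apply, Prod.mk.injEq]
    constructor
    · rintro ⟨hk, rfl⟩
      rw [hm] at hk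
      exact ⟨k, by exact_mod_cast hk, rfl, rfl⟩
    · rintro ⟨k, hk, rfl, rfl⟩
      rw [hm]
      exact ⟨by exact_mod_cast hk, rfl⟩
  rw [block_eq, card_map, Fin.card_filter_val_lt, min_eq_right hmL, hm]

lemma IsDiscretized.card_expandedSupport (hu : IsDiscretized L u) :
    (#(expandedSupport L u) : ℝ) = (∑ i, u i ^ 2) * L := by
  rw [card_eq_sum_card_fiberwise (f := Prod.fst) (t := univ) (fun p _ => mem_coe.2 (mem_univ p.1)),
    Nat.cast_sum, sum_mul]
  exact sum_congr rfl fun i _ => hu.card_filter_fst_expandedSupport i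

lemma IsDiscretized.nonempty_inter_expandedSupport (hu : IsDiscretized L u)
    (hv : IsDiscretized L v) (hL : 0 < L) {i : Fin n} (hui : u i ≠ 0) (hvi : v i ≠ 0) :
    (expandedSupport L u ∩ expandedSupport L v).Nonempty := by
  have block_card := (hu.min_abs hv).card_filter_fst_expandedSupport i
  have block_card_pos : (0 : ℝ) < min |u i| |v i| ^ 2 * L := by positivity
  rw [← block_card, Nat.cast_pos, card_pos, ← expandedSupport_inter] at block_card_pos
  exact block_card_pos.mono (filter_subset _ _)

end ExpandedSupport

lemma natCast_div_natCast_eq_ofReal {a b : ℕ} {x y c : ℝ} (ha : a = x * c) (hb : b = y * c)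
    (hb0 : b ≠ 0) : (a : ℝ≥0∞) / b = ENNReal.ofReal (x / y) := by
  have hb_pos : (0 : ℝ) < b := by positivity
  have hc : c ≠ 0 := right_ne_zero_of_mul (hb ▸ hb_pos.ne')
  rw [← mul_div_mul_right x y hc, ← ha, ← hb, ENNReal.ofReal_div_of_pos hb_pos,
    ENNReal.ofReal_natCast, ENNReal.ofReal_natCast]

theorem weighted_minhash_common_block_probability_general {n : ℕ} (L : ℕ) (u v : Fin n → ℝ)
    (hu : IsDiscretized L u) (hv : IsDiscretized L v)
    (hU : (expandedSupport L u).Nonempty) (hV : (expandedSupport L v).Nonempty) (j : Fin n) :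
    (uniformHash (Fin n × Fin L)
        {h : Fin n × Fin L → ℝ |
          (expandedSupport L u).inf' hU h = (expandedSupport L v).inf' hV h ∧
          (argminOn (expandedSupport L u ∪ expandedSupport L v) hU.inl h).1 = j}
      = ENNReal.ofReal
          (min ((u j) ^ 2) ((v j) ^ 2) / ∑ k, max ((u k) ^ 2) ((v k) ^ 2)))
    ∧ ((∃ k, u k ≠ 0 ∧ v k ≠ 0) →
        ProbabilityTheory.cond (uniformHash (Fin n × Fin L))
          {h : Fin n × Fin L → ℝ |
            (expandedSupport L u).inf' hU h = (expandedSupport L v).inf' hV h}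
          {h : Fin n × Fin L → ℝ |
            (argminOn (expandedSupport L u ∪ expandedSupport L v) hU.inl h).1 = j}
      = ENNReal.ofReal
          (min ((u j) ^ 2) ((v j) ^ 2) /
            ∑ k ∈ Finset.univ.filter (fun k => u k ≠ 0 ∧ v k ≠ 0),
              min ((u k) ^ 2) ((v k) ^ 2))) := by
  have block_card := (hu.min_abs hv).card_filter_fst_expandedSupport j
  have inter_card := (hu.min_abs hv).card_expandedSupport
  have union_card := (hu.max_abs hv).card_expandedSupport
  simp only [← expandedSupport_inter, ← expandedSupport_union, sq_min_abs, sq_max_abs]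
    at block_card inter_card union_card
  constructor
  · rw [uniformHash_inf'_eq_inf'_and_argminOn hU hV fun p => p.1 = j]
    exact natCast_div_natCast_eq_ofReal block_card union_card hU.inl.card_ne_zero
  · rintro ⟨k, huk, hvk⟩
    have hL : 0 < L := hU.elim fun p _ => p.2.pos
    have hUV := hu.nonempty_inter_expandedSupport hv hL huk hvk
    rw [cond_uniformHash_inf'_eq_inf'_argminOn hU hV fun p => p.1 = j,
      sum_filter_ne_zero_min_sq]
    exact natCast_div_natCast_eq_ofReal block_card inter_card hUV.card_ne_zero

/-- For nonzero unit vectors `u, v` with squared entries integer multiples of `1/L` and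
any index `j` with `u j ≠ 0` and `v j ≠ 0`: the probability that the minima of the hash
over `Ū` and `V̄` coincide and the common minimizer over `Ū ∪ V̄` lies in block
`{j} × {1,...,L}` is exactly `min(u[j]², v[j]²) / ∑ₖ max(u[k]², v[k]²)`; in particular,
conditioned on the two minima coinciding, the block index of the common minimizer equals
`j` with probability `min(u[j]², v[j]²) / ∑_{k : u k ≠ 0, v k ≠ 0} min(u[k]², v[k]²)`. -/
theorem weighted_minhash_common_block_probability {n : ℕ} (L : ℕ) (hL : 0 < L)
    (u v : Fin n → ℝ) (hu0 : u ≠ 0) (hv0 : v ≠ 0)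
    (hu1 : ∑ i, (u i) ^ 2 = 1) (hv1 : ∑ i, (v i) ^ 2 = 1)
    (hu : ∀ i, ∃ k : ℤ, (u i) ^ 2 = (k : ℝ) / L)
    (hv : ∀ i, ∃ k : ℤ, (v i) ^ 2 = (k : ℝ) / L)
    (hU : (expandedSupport L u).Nonempty) (hV : (expandedSupport L v).Nonempty)
    (j : Fin n) (hju : u j ≠ 0) (hjv : v j ≠ 0) :
    (uniformHash (Fin n × Fin L)
        {h : Fin n × Fin L → ℝ |
          (expandedSupport L u).inf' hU h = (expandedSupport L v).inf' hV h ∧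
          (argminOn (expandedSupport L u ∪ expandedSupport L v) hU.inl h).1 = j}
      = ENNReal.ofReal
          (min ((u j) ^ 2) ((v j) ^ 2) / ∑ k, max ((u k) ^ 2) ((v k) ^ 2)))
    ∧ (ProbabilityTheory.cond (uniformHash (Fin n × Fin L))
          {h : Fin n × Fin L → ℝ |
            (expandedSupport L u).inf' hU h = (expandedSupport L v).inf' hV h}
          {h : Fin n × Fin L → ℝ |
            (argminOn (expandedSupport L u ∪ expandedSupport L v) hU.inl h).1 = j}
      = ENNReal.ofReal
          (min ((u j) ^ 2) ((v j) ^ 2) /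
            ∑ k ∈ Finset.univ.filter (fun k => u k ≠ 0 ∧ v k ≠ 0),
              min ((u k) ^ 2) ((v k) ^ 2))) := by
  exact (weighted_minhash_common_block_probability_general L u v
    (isDiscretized_of_sum_sq_eq_one hu1 hu hL) (isDiscretized_of_sum_sq_eq_one hv1 hv hL)
    hU hV j).imp_right fun h => h ⟨j, hju, hjv⟩
end
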